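/- Let E be an n-dimensional real subspace of ℂⁿ, and let φ : ℝⁿ → ℂⁿ be an injective real-linear map such that E ⊕ Im(φ) = ℂⁿ (as real vector spaces). Let Ψ be a holomorphic (entire) function on ℂⁿ such that for every compact set K ⊆ E, sup_{a ∈ K} ∫_{ℝⁿ} |Ψ(a + φ(t))| dt < ∞. Then the function I(a) = ∫_{ℝⁿ} Ψ(a + φ(t)) dt is constant on E. -/

import Mathlib

open MeasureTheory Real Complex

noncomputable section

/-- Parameter integrals of entire functions with locally bounded `L¹` norms are holomorphic. -/
lemma differentiable_param {n : ℕ} (g : (Fin n → ℝ) → ℂ → ℂ)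
    (hc : Continuous (Function.uncurry g)) (hd : ∀ t, Differentiable ℂ (g t))
    (w₀ : ℂ) (C : ENNReal) (hC : C < ⊤)
    (hb : ∀ w ∈ Metric.closedBall w₀ 1, ∫⁻ t, ‖g t w‖ₑ ≤ C) :
    DifferentiableAt ℂ (fun w => ∫ t, g t w) w₀ := by
  set μ : Measure ℝ := volume.restrict (Set.uIoc 0 (2 * π)) with hμ
  have hcm : Continuous (circleMap w₀ 1) := continuous_circleMap _ _
  have hmem : ∀ θ, circleMap w₀ 1 θ ∈ Metric.closedBall w₀ 1 := fun θ =>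
    circleMap_mem_closedBall _ zero_le_one _
  have hGc : Continuous (fun p : ℝ × (Fin n → ℝ) => g p.2 (circleMap w₀ 1 p.1)) :=
    hc.comp (continuous_snd.prodMk (hcm.comp continuous_fst))
  have hG : Integrable (fun p : ℝ × (Fin n → ℝ) => g p.2 (circleMap w₀ 1 p.1))
      (μ.prod volume) := by
    refine ⟨hGc.aestronglyMeasurable, ?_⟩
    rw [hasFiniteIntegral_iff_enorm, lintegral_prod _ (by fun_prop)]
    calc ∫⁻ θ, ∫⁻ t, ‖g t (circleMap w₀ 1 θ)‖ₑ ∂volume ∂μ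
        ≤ ∫⁻ θ, C ∂μ := lintegral_mono fun θ => hb _ (hmem θ)
      _ = C * μ Set.univ := by simp
      _ < ⊤ := ENNReal.mul_lt_top hC (by
          rw [hμ, Measure.restrict_apply_univ, Set.uIoc_of_le two_pi_pos.le, Real.volume_Ioc]
          exact ENNReal.ofReal_lt_top)
  have hJ : CircleIntegrable (fun w => ∫ t, g t w) w₀ ((1 : NNReal) : ℝ) := by
    rw [circleIntegrable_def, intervalIntegrable_iff]
    simpa [IntegrableOn] using hG.integral_prod_left
  have hps := (hasFPowerSeriesOn_cauchy_integral hJ zero_lt_one).analyticAt.differentiableAt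
  refine hps.congr_of_eventuallyEq ?_
  filter_upwards [Metric.ball_mem_nhds w₀ zero_lt_one] with w hw
  have h1 : ∀ t, g t w = (2 * π * I : ℂ)⁻¹ • ∮ z in C(w₀, 1), (z - w)⁻¹ • g t z := fun t =>
    ((hd t).diffContOnCl.two_pi_i_inv_smul_circleIntegral_sub_inv_smul hw).symm
  have hk : Continuous (fun θ : ℝ => deriv (circleMap w₀ 1) θ * (circleMap w₀ 1 θ - w)⁻¹) := by
    simp only [deriv_circleMap]
    refine Continuous.mul (by fun_prop) (Continuous.inv₀ (by fun_prop) fun θ => ?_)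
    intro h
    have := circleMap_mem_sphere w₀ zero_le_one θ
    rw [sub_eq_zero.1 h] at this
    rw [Metric.mem_sphere] at this
    rw [Metric.mem_ball] at hw
    linarith
  obtain ⟨B, hB⟩ := isCompact_uIcc.exists_bound_of_continuousOn (s := Set.uIcc 0 (2 * π))
    hk.continuousOn
  have hkG : Integrable (fun p : ℝ × (Fin n → ℝ) =>
      (deriv (circleMap w₀ 1) p.1 * (circleMap w₀ 1 p.1 - w)⁻¹) * g p.2 (circleMap w₀ 1 p.1))
      (μ.prod volume) := by
    refine hG.bdd_mul (c := B) (hk.comp continuous_fst).aestronglyMeasurable ?_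
    have : ∀ᵐ θ ∂μ, ‖deriv (circleMap w₀ 1) θ * (circleMap w₀ 1 θ - w)⁻¹‖ ≤ B := by
      filter_upwards [ae_restrict_mem measurableSet_uIoc] with θ hθ
      exact hB θ (Set.uIoc_subset_uIcc hθ)
    exact Measure.quasiMeasurePreserving_fst.ae this
  have hsw := intervalIntegral_integral_swap (a := 0) (b := 2 * π) (μ := volume)
    (f := fun θ t => (deriv (circleMap w₀ 1) θ * (circleMap w₀ 1 θ - w)⁻¹) *
      g t (circleMap w₀ 1 θ)) hkG
  simp only [h1 , integral_smul]
  congr 1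
  simp only [circleIntegral, smul_eq_mul, NNReal.coe_one, ← mul_assoc]
  rw [← hsw]
  simp only [integral_const_mul]

/-- An entire function that is integrable over a real subspace containing a complex line has
integral zero. -/
lemma integral_zero_of_line {n : ℕ} (h : (Fin n → ℝ) → ℂ) (hc : Continuous h)
    (hi : Integrable h) (u : ℂ → (Fin n → ℝ)) (hu : Continuous u) (δ : ℝ) (hδ : 0 < δ)
    (hn : ∀ w, δ * ‖w‖ ≤ ‖u w‖) (hd : ∀ t, Differentiable ℂ (fun w => h (t + u w)))
    (hu0 : u 0 = 0) : ∫ t, h t = 0 := by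
  set T : ℝ → ENNReal := fun r => ∫⁻ t in {t | r ≤ ‖t‖}, ‖h t‖ₑ with hT
  have hTm : ∀ r : ℝ, MeasurableSet {t : Fin n → ℝ | r ≤ ‖t‖} := fun r =>
    (isClosed_le continuous_const continuous_norm).measurableSet
  have hlim : Filter.Tendsto T Filter.atTop (nhds 0) := by
    have : Filter.Tendsto (fun r : ℝ => ∫⁻ t, Set.indicator {t | r ≤ ‖t‖} (fun t => ‖h t‖ₑ) t)
        Filter.atTop (nhds (∫⁻ t : Fin n → ℝ, 0)) := by
      refine tendsto_lintegral_filter_of_dominated_convergence (fun t => ‖h t‖ₑ)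
        (Filter.Eventually.of_forall fun r => ?_) (Filter.Eventually.of_forall fun r => ?_) ?_ ?_
      · exact (hc.measurable.enorm).indicator (hTm r)
      · exact Filter.Eventually.of_forall fun t => Set.indicator_le_self _ _ _
      · exact hi.2.ne
      · refine Filter.Eventually.of_forall fun t => ?_
        refine tendsto_const_nhds.congr' ?_
        filter_upwards [Filter.eventually_gt_atTop ‖t‖] with r hr
        rw [Set.indicator_of_notMem]
        simpa using hr
    simp only [lintegral_indicator (hTm _), lintegral_zero] at this
    exact this
  have key : ∀ ρ R : ℝ, 0 < R → ∫⁻ t in {t | ρ ≤ ‖t‖}ᶜ, ‖h t‖ₑ ≤ T (δ * R - ρ) := by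
    intro ρ R hR
    set μ : Measure ℝ := volume.restrict (Set.Ioc 0 (2 * π)) with hμ
    have hpt : ∀ t, ‖h t‖ₑ ≤ ENNReal.ofReal (2 * π)⁻¹ * ∫⁻ θ, ‖h (t + u (circleMap 0 R θ))‖ₑ ∂μ := by
      intro t
      have h1 : circleAverage (fun w => h (t + u w)) 0 R = h (t + u 0) :=
        (hd t).diffContOnCl.circleAverage
      rw [hu0, add_zero, circleAverage_def, intervalIntegral.integral_of_le two_pi_pos.le] at h1
      rw [← h1, enorm_smul, Real.enorm_eq_ofReal (by positivity)]
      gcongr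
      exact enorm_integral_le_lintegral_enorm _
    have hcm : Continuous (circleMap 0 R) := continuous_circleMap _ _
    calc ∫⁻ t in {t | ρ ≤ ‖t‖}ᶜ, ‖h t‖ₑ
        ≤ ∫⁻ t in {t | ρ ≤ ‖t‖}ᶜ,
          ENNReal.ofReal (2 * π)⁻¹ * ∫⁻ θ, ‖h (t + u (circleMap 0 R θ))‖ₑ ∂μ :=
          lintegral_mono hpt
      _ = ENNReal.ofReal (2 * π)⁻¹ * ∫⁻ t in {t | ρ ≤ ‖t‖}ᶜ,
          ∫⁻ θ, ‖h (t + u (circleMap 0 R θ))‖ₑ ∂μ := by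
          rw [lintegral_const_mul' _ _ ENNReal.ofReal_ne_top]
      _ = ENNReal.ofReal (2 * π)⁻¹ * ∫⁻ θ, ∫⁻ t in {t | ρ ≤ ‖t‖}ᶜ,
          ‖h (t + u (circleMap 0 R θ))‖ₑ ∂volume ∂μ := by
          rw [lintegral_lintegral_swap]
          apply Measurable.aemeasurable
          apply Continuous.measurable
          simp only [Function.uncurry_def]
          fun_prop
      _ ≤ ENNReal.ofReal (2 * π)⁻¹ * ∫⁻ θ, T (δ * R - ρ) ∂μ := by
          gcongr with θ
          change _ ≤ ∫⁻ t in {t | δ * R - ρ ≤ ‖t‖}, ‖h t‖ₑ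
          rw [← lintegral_indicator (hTm _), ← lintegral_indicator (hTm _).compl,
            ← lintegral_add_right_eq_self (Set.indicator {t | δ * R - ρ ≤ ‖t‖} _)
              (u (circleMap 0 R θ))]
          refine lintegral_mono fun t => ?_
          by_cases ht : ρ ≤ ‖t‖
          · rw [Set.indicator_of_notMem (by simpa using ht)]
            exact zero_le
          · rw [Set.indicator_of_mem (by simpa using ht), Set.indicator_of_mem]
            have h1 := hn (circleMap 0 R θ)
            have h2 : ‖circleMap 0 R θ‖ = R := by simp [abs_of_pos hR]
            rw [h2] at h1
            have h3 := norm_sub_le (t + u (circleMap 0 R θ)) t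
            rw [add_sub_cancel_left] at h3
            simp only [Set.mem_ofPred_eq]
            push Not at ht
            linarith
      _ = T (δ * R - ρ) := by
          rw [lintegral_const, hμ, Measure.restrict_apply_univ, Real.volume_Ioc, sub_zero, mul_comm, mul_assoc,
            ← ENNReal.ofReal_mul two_pi_pos.le,
            mul_inv_cancel₀ two_pi_pos.ne', ENNReal.ofReal_one, mul_one]
  have key2 : ∀ ρ : ℝ, ∫⁻ t in {t | ρ ≤ ‖t‖}ᶜ, ‖h t‖ₑ = 0 := by
    intro ρ
    refine le_antisymm (ge_of_tendsto (hlim.comp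
      (Filter.tendsto_atTop_add_const_right _ (-ρ) (Filter.tendsto_id.const_mul_atTop hδ))) ?_)
      zero_le
    filter_upwards [Filter.eventually_gt_atTop 0] with R hR
    simpa [sub_eq_add_neg] using key ρ R hR
  have key3 : ∫⁻ t, ‖h t‖ₑ = 0 := by
    refine le_antisymm (ge_of_tendsto hlim (Filter.Eventually.of_forall fun ρ => ?_)) zero_le
    rw [← lintegral_add_compl _ (hTm ρ), key2 ρ, add_zero]
  rw [lintegral_eq_zero_iff hc.measurable.enorm] at key3
  apply integral_eq_zero_of_ae
  filter_upwards [key3] with t ht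
  simpa using ht

theorem contour_shift_invariance (n : ℕ) (E : Submodule ℝ (Fin n → ℂ))
    (hE : Module.finrank ℝ E = n)
    (φ : (Fin n → ℝ) →ₗ[ℝ] (Fin n → ℂ)) (hφ : Function.Injective φ)
    (hcompl : IsCompl E (LinearMap.range φ))
    (Ψ : (Fin n → ℂ) → ℂ) (hΨ : Differentiable ℂ Ψ)
    (hK : ∀ K : Set (Fin n → ℂ), IsCompact K → K ⊆ (E : Set (Fin n → ℂ)) →
      ∃ C : ENNReal, C < ⊤ ∧ ∀ a ∈ K,
        (∫⁻ t : Fin n → ℝ, (‖Ψ (a + φ t)‖₊ : ENNReal)) ≤ C) :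
    ∀ a ∈ E, ∀ b ∈ E,
      (∫ t : Fin n → ℝ, Ψ (a + φ t)) = ∫ t : Fin n → ℝ, Ψ (b + φ t) := by
  classical
  have hφc : Continuous φ := φ.continuous_of_finiteDimensional
  have hΨc : Continuous Ψ := hΨ.continuous
  -- bounds on all of the ambient space
  have hdec : ∀ z : Fin n → ℂ, ∃ s, z = E.projectionOnto _ hcompl z + φ s := by
    intro z
    have h1 : z - E.projectionOnto _ hcompl z ∈ LinearMap.range φ := by
      refine (Submodule.ker_projectionOnto hcompl).le ?_
      rw [LinearMap.mem_ker, map_sub, Submodule.projectionOnto_apply_left, sub_self]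
    obtain ⟨s, hs⟩ := h1
    exact ⟨s, by rw [hs]; abel⟩
  have hP : Continuous fun z => (E.projectionOnto _ hcompl z : Fin n → ℂ) :=
    continuous_subtype_val.comp (LinearMap.continuous_of_finiteDimensional _)
  have hbound : ∀ K : Set (Fin n → ℂ), IsCompact K → ∃ C : ENNReal, C < ⊤ ∧ ∀ z ∈ K,
      ∫⁻ t : Fin n → ℝ, ‖Ψ (z + φ t)‖ₑ ≤ C := by
    intro K hKc
    obtain ⟨C, hC, hb⟩ := hK _ (hKc.image hP) (by rintro _ ⟨z, -, rfl⟩; simp)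
    refine ⟨C, hC, fun z hz => ?_⟩
    obtain ⟨s, hs⟩ := hdec z
    refine le_trans (le_of_eq ?_) (hb _ ⟨z, hz, rfl⟩)
    rw [← lintegral_add_right_eq_self (fun t => ((‖Ψ (_ + φ t)‖₊ : ENNReal))) s]
    refine lintegral_congr fun t => ?_
    conv_lhs => rw [hs]
    rw [map_add, add_assoc, add_comm (φ s)]
    rfl
  have hΨint : ∀ z, Integrable fun t : Fin n → ℝ => Ψ (z + φ t) := by
    intro z
    obtain ⟨C, hC, hb⟩ := hbound {z} isCompact_singleton
    exact ⟨(by fun_prop : Continuous fun t : Fin n → ℝ => Ψ (z + φ t)).aestronglyMeasurable,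
      (hb z rfl).trans_lt hC⟩
  set J : (Fin n → ℂ) → ℂ := fun z => ∫ t : Fin n → ℝ, Ψ (z + φ t) with hJ
  have htr : ∀ z s, J (z + φ s) = J z := by
    intro z s
    simp only [hJ]
    rw [← integral_add_right_eq_self (fun t => Ψ (z + φ t)) s]
    refine integral_congr_ae (Filter.Eventually.of_forall fun t => ?_)
    simp only [map_add]
    congr 1
    abel
  have hline : ∀ z s, J (z + I • φ s) = J z := by
    intro z s
    have hdiff : Differentiable ℂ fun w : ℂ => J (z + w • φ s) := by
      intro w₀
      obtain ⟨C, hC, hb⟩ := hbound ((fun w : ℂ => z + w • φ s) '' Metric.closedBall w₀ 1)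
        ((isCompact_closedBall _ _).image (by fun_prop))
      refine differentiable_param (fun t w => Ψ (z + w • φ s + φ t)) ?_ ?_ w₀ C hC ?_
      · simp only [Function.uncurry_def]
        fun_prop
      · intro t
        fun_prop
      · intro w hw
        exact hb _ ⟨w, hw, rfl⟩
    have hder : ∀ w, deriv (fun w : ℂ => J (z + w • φ s)) w = 0 := by
      intro w
      have h1 := (hdiff w).hasDerivAt
      have h2 : HasDerivAt (fun x : ℝ => w + (x : ℂ)) 1 0 := by
        simpa using (Complex.ofRealCLM.hasDerivAt (x := 0)).const_add w
      have h3 := HasDerivAt.scomp (g₁ := fun w : ℂ => J (z + w • φ s))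
        (g₁' := deriv (fun w : ℂ => J (z + w • φ s)) w) (0 : ℝ)
        (by rw [Complex.ofReal_zero, add_zero]; exact h1) h2
      have h4 : (fun w : ℂ => J (z + w • φ s)) ∘ (fun x : ℝ => w + (x : ℂ)) =
          fun _ => J (z + w • φ s) := by
        funext x
        simp only [Function.comp]
        rw [add_smul, ← add_assoc, Complex.coe_smul, ← φ.map_smul, htr]
      rw [h4] at h3
      simpa using h3.unique (hasDerivAt_const _ _)
    have := is_const_of_deriv_eq_zero hdiff hder I 0
    simpa using this
  let L : ((Fin n → ℝ) × (Fin n → ℝ)) →ₗ[ℝ] (Fin n → ℂ) :=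
    LinearMap.coprod φ ((LinearMap.lsmul ℂ (Fin n → ℂ) I).restrictScalars ℝ ∘ₗ φ)
  have hL : ∀ s s', L (s, s') = φ s + I • φ s' := fun s s' => by simp [L]
  have hdim : Module.finrank ℝ ((Fin n → ℝ) × (Fin n → ℝ)) = Module.finrank ℝ (Fin n → ℂ) := by
    rw [Module.finrank_prod, Module.finrank_pi, Module.finrank_pi_fintype]
    simp [Complex.finrank_real_complex, mul_two]
  intro a ha b hb
  change J a = J b
  by_cases hinj : Function.Injective L
  · obtain ⟨⟨s, s'⟩, hs⟩ :=
      (LinearMap.injective_iff_surjective_of_finrank_eq_finrank hdim).1 hinj (b - a)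
    rw [hL] at hs
    have : b = a + φ s + I • φ s' := by rw [add_assoc, hs]; abel
    rw [this, hline, htr]
  · rw [injective_iff_map_eq_zero] at hinj
    push Not at hinj
    obtain ⟨⟨s, s'⟩, h0, hne⟩ := hinj
    rw [hL] at h0
    have hs' : s' ≠ 0 := by
      rintro rfl
      apply hne
      have : φ s = 0 := by simpa using h0
      have : s = 0 := hφ (by simpa using this)
      simp [this]
    have hIs : I • φ s' = φ (-s) := by
      rw [map_neg]
      exact eq_neg_of_add_eq_zero_right h0
    let u : ℂ → (Fin n → ℝ) := fun w => w.re • s' + w.im • (-s)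
    have hφu : ∀ w, φ (u w) = w • φ s' := by
      intro w
      simp only [u, map_add, map_smul, ← hIs]
      conv_rhs => rw [← Complex.re_add_im w, add_smul, mul_smul]
      simp only [Complex.coe_smul]
    have hv : 0 < ‖φ s'‖ := by
      rw [norm_pos_iff]
      intro h
      exact hs' (hφ (by simpa using h))
    let Φ : (Fin n → ℝ) →L[ℝ] (Fin n → ℂ) := LinearMap.toContinuousLinearMap φ
    have hΦ : ∀ t, ‖φ t‖ ≤ (‖Φ‖ + 1) * ‖t‖ := fun t => by
      have h1 : ‖φ t‖ ≤ ‖Φ‖ * ‖t‖ := Φ.le_opNorm t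
      nlinarith [norm_nonneg t]
    have hpos : 0 < ‖Φ‖ + 1 := by positivity
    have hzero : ∀ z, J z = 0 := by
      intro z
      refine integral_zero_of_line (fun t => Ψ (z + φ t)) (by fun_prop) (hΨint z) u
        (by fun_prop) (‖φ s'‖ / (‖Φ‖ + 1)) (by positivity) ?_ ?_ (by simp [u])
      · intro w
        have h1 := hΦ (u w)
        rw [hφu, norm_smul] at h1
        rw [div_mul_eq_mul_div, div_le_iff₀ hpos]
        linarith
      · intro t
        simp only [map_add, hφu]
        fun_prop
    rw [hzero, hzero]
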